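/- arXiv:2001.08302 — 2 statements merged into one kernel-verified Lean document; each statement's English description precedes it below -/
import Mathlib

section
/- Let n ≥ 1, let Ω ⊆ ℂⁿ be a bounded measurable set equipped with Lebesgue measure μ, let N ⊆ Ω be measurable, and let 1 < p < ∞. Let σ : Ω → [0,∞) be measurable and positive a.e., with both σ and σ' := σ^{-1/(p-1)} integrable on Ω. Let K : Ω × Ω → ℂ be measurable and suppose there is M₀ ≥ 0 such that |K(z,w)| ≤ M₀ for all (z,w) ∈ (Ω × Ω) \ (N × N). Suppose there is C₀ ≥ 0 such that for every f ∈ L^p_σ(Ω) the integral ∫_N K(z,w) f(w) dμ(w) converges absolutely for a.e. z ∈ N and the operator P|_N f(z) := 1_N(z)·∫_N K(z,w) f(w) dμ(w) satisfies ‖P|_N f‖_{L^p_σ(Ω)} ≤ C₀·‖f‖_{L^p_σ(Ω)}. Then there is C ≥ 0 such that for every f ∈ L^p_σ(Ω) the integral P f(z) := ∫_Ω K(z,w) f(w) dμ(w) converges absolutely for a.e. z ∈ Ω and ‖P f‖_{L^p_σ(Ω)} ≤ C·‖f‖_{L^p_σ(Ω)}. -/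
open MeasureTheory ENNReal

/-- Reduction of the weighted boundedness of a Bergman-type projection on `Ω`
to its boundedness on a relative neighborhood `N` of the boundary: if the
kernel is bounded off `N × N`, `σ` and `σ' = σ^{-1/(p-1)}` are integrable on
`Ω`, and the restricted operator `P|_N` is bounded on `L^p_σ(Ω)`, then the
full operator `P` is bounded on `L^p_σ(Ω)`. -/
theorem statement0 (n : ℕ) (hn : 1 ≤ n)
    (Ω N : Set (Fin n → ℂ)) (hΩm : MeasurableSet Ω)
    (hΩbd : Bornology.IsBounded Ω) (hNm : MeasurableSet N) (hNΩ : N ⊆ Ω)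
    (p : ℝ) (hp : 1 < p)
    (σ : (Fin n → ℂ) → ℝ) (hσm : Measurable σ)
    (hσpos : ∀ᵐ z ∂(volume.restrict Ω), 0 < σ z)
    (hσint : ∫⁻ z in Ω, ENNReal.ofReal (σ z) < ⊤)
    (hσ'int : ∫⁻ z in Ω, ENNReal.ofReal (σ z ^ (-1 / (p - 1))) < ⊤)
    (K : (Fin n → ℂ) → (Fin n → ℂ) → ℂ)
    (hKm : Measurable fun q : (Fin n → ℂ) × (Fin n → ℂ) => K q.1 q.2)
    (M₀ : ℝ) (hM₀ : 0 ≤ M₀)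
    (hKbd : ∀ z w, z ∈ Ω → w ∈ Ω → ¬(z ∈ N ∧ w ∈ N) → ‖K z w‖ ≤ M₀)
    (C₀ : ℝ) (hC₀ : 0 ≤ C₀)
    (hPN : ∀ f : (Fin n → ℂ) → ℂ, Measurable f →
      (∫⁻ z in Ω, ENNReal.ofReal ‖f z‖ ^ p * ENNReal.ofReal (σ z)) < ⊤ →
      (∀ᵐ z ∂(volume.restrict N), IntegrableOn (fun w => K z w * f w) N volume) ∧
      (∫⁻ z in Ω,
          ENNReal.ofReal ‖N.indicator (fun z' => ∫ w in N, K z' w * f w) z‖ ^ p *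
            ENNReal.ofReal (σ z)) ^ (1 / p) ≤
        ENNReal.ofReal C₀ *
          (∫⁻ z in Ω, ENNReal.ofReal ‖f z‖ ^ p * ENNReal.ofReal (σ z)) ^ (1 / p)) :
    ∃ C : ℝ, 0 ≤ C ∧ ∀ f : (Fin n → ℂ) → ℂ, Measurable f →
      (∫⁻ z in Ω, ENNReal.ofReal ‖f z‖ ^ p * ENNReal.ofReal (σ z)) < ⊤ →
      (∀ᵐ z ∂(volume.restrict Ω), IntegrableOn (fun w => K z w * f w) Ω volume) ∧
      (∫⁻ z in Ω, ENNReal.ofReal ‖∫ w in Ω, K z w * f w‖ ^ p *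
          ENNReal.ofReal (σ z)) ^ (1 / p) ≤
        ENNReal.ofReal C *
          (∫⁻ z in Ω, ENNReal.ofReal ‖f z‖ ^ p * ENNReal.ofReal (σ z)) ^ (1 / p) := by
  have hp0 : 0 < p := by linarith
  have hpq : p.HolderConjugate (p / (p - 1)) := Real.HolderConjugate.conjExponent hp
  set q : ℝ := p / (p - 1) with hq
  have hq0 : 0 < q := hpq.symm.pos
  set μ : Measure (Fin n → ℂ) := volume.restrict Ω with hμ
  set s : (Fin n → ℂ) → ℝ≥0∞ := fun z => ENNReal.ofReal (σ z) with hs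
  have hsm : Measurable s := hσm.ennreal_ofReal
  set S' : ℝ≥0∞ := (∫⁻ z, ENNReal.ofReal (σ z ^ (-1 / (p - 1))) ∂μ) ^ (1 / q) with hS'
  set S : ℝ≥0∞ := (∫⁻ z, s z ∂μ) ^ (1 / p) with hS
  have hS't : S' ≠ ⊤ := ENNReal.rpow_ne_top_of_nonneg (by positivity) hσ'int.ne
  have hSt : S ≠ ⊤ := ENNReal.rpow_ne_top_of_nonneg (by positivity) hσint.ne
  refine ⟨C₀ + M₀ * S'.toReal * S.toReal, by positivity, fun f hf hfin => ?_⟩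
  obtain ⟨hint, hbd⟩ := hPN f hf hfin
  set A : ℝ≥0∞ := (∫⁻ z, ENNReal.ofReal ‖f z‖ ^ p * ENNReal.ofReal (σ z) ∂μ) ^ (1 / p) with hA
  have hAt : A ≠ ⊤ := ENNReal.rpow_ne_top_of_nonneg (by positivity) hfin.ne
  have hfm : Measurable fun z => ENNReal.ofReal ‖f z‖ := hf.norm.ennreal_ofReal
  -- Hölder
  have hB : ∫⁻ z, ENNReal.ofReal ‖f z‖ ∂μ ≤ A * S' := by
    have h := ENNReal.lintegral_mul_le_Lp_mul_Lq μ hpq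
      (f := fun z => ENNReal.ofReal ‖f z‖ * s z ^ (1 / p)) (g := fun z => s z ^ (-(1 / p)))
      (hfm.mul (hsm.pow_const _)).aemeasurable (hsm.pow_const _).aemeasurable
    have e1 : ∫⁻ z, ENNReal.ofReal ‖f z‖ ∂μ = ∫⁻ z, ((fun z => ENNReal.ofReal ‖f z‖ * s z ^ (1 / p)) *
        (fun z => s z ^ (-(1 / p)))) z ∂μ := by
      apply lintegral_congr_ae
      filter_upwards [hσpos] with z hz
      have h0 : s z ≠ 0 := by simpa [hs] using hz
      simp only [Pi.mul_apply]
      rw [mul_assoc, ← ENNReal.rpow_add _ _ h0 ENNReal.ofReal_ne_top]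
      simp
    have e2 : ∫⁻ z, (ENNReal.ofReal ‖f z‖ * s z ^ (1 / p)) ^ p ∂μ =
        ∫⁻ z, ENNReal.ofReal ‖f z‖ ^ p * ENNReal.ofReal (σ z) ∂μ := by
      apply lintegral_congr
      intro z
      rw [ENNReal.mul_rpow_of_nonneg _ _ hp0.le, ← ENNReal.rpow_mul, one_div_mul_cancel hp0.ne',
        ENNReal.rpow_one]
    have e3 : ∫⁻ z, (s z ^ (-(1 / p))) ^ q ∂μ =
        ∫⁻ z, ENNReal.ofReal (σ z ^ (-1 / (p - 1))) ∂μ := by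
      apply lintegral_congr_ae
      filter_upwards [hσpos] with z hz
      rw [← ENNReal.rpow_mul, ← ENNReal.ofReal_rpow_of_pos hz]
      congr 1
      have : p - 1 ≠ 0 := by linarith
      rw [hq]; field_simp
    rw [e1]
    refine h.trans (le_of_eq ?_)
    simp only [e2, e3, hA, hS']
  have hfint : Integrable f μ := by
    refine ⟨hf.aestronglyMeasurable, ?_⟩
    rw [hasFiniteIntegral_iff_norm]
    exact hB.trans_lt (ENNReal.mul_lt_top hAt.lt_top hS't.lt_top)
  have hKz : ∀ z, Measurable fun w => K z w := fun z => hKm.comp measurable_prodMk_left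
  have hsub : ∀ z ∈ Ω, ∀ T : Set (Fin n → ℂ), MeasurableSet T → T ⊆ Ω → (∀ w ∈ T, ¬(z ∈ N ∧ w ∈ N)) →
      IntegrableOn (fun w => K z w * f w) T volume ∧
      ‖∫ w in T, K z w * f w‖ ≤ M₀ * ∫ w, ‖f w‖ ∂μ := by
    intro z hz T hT hTΩ hTN
    have hfT : IntegrableOn f T volume := IntegrableOn.mono_set hfint hTΩ
    have hb : ∀ᵐ w ∂(volume.restrict T), ‖K z w * f w‖ ≤ M₀ * ‖f w‖ := by
      filter_upwards [ae_restrict_mem hT] with w hw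
      rw [norm_mul]
      exact mul_le_mul_of_nonneg_right (hKbd z w hz (hTΩ hw) (hTN w hw)) (norm_nonneg _)
    refine ⟨Integrable.mono' (hfT.norm.const_mul M₀) ((hKz z).mul hf).aestronglyMeasurable hb, ?_⟩
    refine (norm_integral_le_of_norm_le (hfT.norm.const_mul M₀) hb).trans ?_
    rw [integral_const_mul]
    refine mul_le_mul_of_nonneg_left ?_ hM₀
    exact setIntegral_mono_set (s := T) (t := Ω) hfint.norm
      (Filter.Eventually.of_forall fun _ => norm_nonneg _) (HasSubset.Subset.eventuallyLE hTΩ)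
  have hint' : ∀ᵐ z ∂μ, z ∈ N → IntegrableOn (fun w => K z w * f w) N volume :=
    ae_restrict_of_ae ((ae_restrict_iff' hNm).1 hint)
  set B : ℝ := ∫ w, ‖f w‖ ∂μ with hBdef
  have hB0 : 0 ≤ B := integral_nonneg fun _ => norm_nonneg _
  set u : (Fin n → ℂ) → ℂ := N.indicator (fun z' => ∫ w in N, K z' w * f w) with hu
  have key : ∀ᵐ z ∂μ, IntegrableOn (fun w => K z w * f w) Ω volume ∧
      ‖∫ w in Ω, K z w * f w‖ ≤ ‖u z‖ + M₀ * B := by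
    filter_upwards [hint', ae_restrict_mem hΩm] with z hz hzΩ
    by_cases hzN : z ∈ N
    · obtain ⟨h1, h2⟩ := hsub z hzΩ (Ω \ N) (hΩm.diff hNm) Set.diff_subset (fun w hw h => hw.2 h.2)
      have hU : N ∪ Ω \ N = Ω := Set.union_diff_cancel hNΩ
      have h3 := (hz hzN).union h1
      rw [hU] at h3
      refine ⟨h3, ?_⟩
      have h4 := setIntegral_union (Set.disjoint_sdiff_right) (hΩm.diff hNm) (hz hzN) h1
      rw [hU] at h4
      rw [h4, hu, Set.indicator_of_mem hzN]
      exact (norm_add_le _ _).trans (by gcongr)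
    · obtain ⟨h1, h2⟩ := hsub z hzΩ Ω hΩm subset_rfl (fun w hw h => hzN h.1)
      exact ⟨h1, h2.trans (by linarith [norm_nonneg (u z)])⟩
  refine ⟨key.mono fun z h => h.1, ?_⟩
  have hum : Measurable u := by
    refine Measurable.indicator ?_ hNm
    have : StronglyMeasurable (Function.uncurry fun z w => K z w * f w) :=
      (hKm.mul (hf.comp measurable_snd)).stronglyMeasurable
    exact this.integral_prod_right.measurable
  have hunm : Measurable fun z => ENNReal.ofReal ‖u z‖ := hum.norm.ennreal_ofReal
  have hmink := ENNReal.lintegral_Lp_add_le (μ := μ.withDensity s) (p := p)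
    (f := fun z => ENNReal.ofReal ‖u z‖) (g := fun _ => ENNReal.ofReal (M₀ * B))
    hunm.aemeasurable aemeasurable_const hp.le
  have hwd : ∀ g : (Fin n → ℂ) → ℝ≥0∞, Measurable g →
      ∫⁻ z, g z ∂(μ.withDensity s) = ∫⁻ z, g z * s z ∂μ := by
    intro g hg
    rw [lintegral_withDensity_eq_lintegral_mul _ hsm hg]
    simp only [Pi.mul_apply, mul_comm]
  have hBe : ENNReal.ofReal B ≤ A * S' := by
    rw [hBdef, ofReal_integral_eq_lintegral_ofReal hfint.norm
      (Filter.Eventually.of_forall fun _ => norm_nonneg _)]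
    exact hB
  simp only [Pi.add_apply] at hmink
  rw [hwd _ ((hunm.add_const _).pow_const _), hwd _ (hunm.pow_const _),
    hwd _ measurable_const, lintegral_const_mul _ hsm, ENNReal.mul_rpow_of_nonneg _ _ (by positivity),
    ← ENNReal.rpow_mul, mul_one_div_cancel hp0.ne', ENNReal.rpow_one] at hmink
  calc _ ≤ (∫⁻ z, (ENNReal.ofReal ‖u z‖ + ENNReal.ofReal (M₀ * B)) ^ p * s z ∂μ) ^ (1 / p) := by
        refine ENNReal.rpow_le_rpow (lintegral_mono_ae ?_) (by positivity)
        filter_upwards [key] with z hz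
        refine mul_le_mul_left (ENNReal.rpow_le_rpow ?_ hp0.le) _
        rw [← ENNReal.ofReal_add (norm_nonneg _) (by positivity)]
        exact ENNReal.ofReal_le_ofReal hz.2
    _ ≤ _ := hmink
    _ ≤ ENNReal.ofReal C₀ * A + ENNReal.ofReal M₀ * (A * S') * S := by
        refine add_le_add hbd ?_
        rw [ENNReal.ofReal_mul hM₀]
        gcongr
    _ = _ := by
        rw [ENNReal.ofReal_add hC₀ (by positivity), ENNReal.ofReal_mul (by positivity),
          ENNReal.ofReal_mul hM₀, ENNReal.ofReal_toReal hSt, ENNReal.ofReal_toReal hS't]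
        ring
end

section
/- Let (Ω, μ) be a measure space, 1 < p < ∞, and σ : Ω → [0,∞) measurable and positive μ-a.e.; set σ' := σ^{-1/(p-1)}. Let T be a linear operator on L^p_σ := {f measurable : ∫_Ω |f|^p σ dμ < ∞} satisfying ‖Tf‖_{L^p_σ} ≤ A·‖f‖_{L^p_σ} for all f ∈ L^p_σ, where ‖g‖_{L^p_σ} := (∫_Ω |g|^p σ dμ)^{1/p}. Let B₁, B₂ ⊆ Ω be measurable sets with 0 < μ(B_i) < ∞, ∫_{B_i} σ dμ < ∞ and ∫_{B_i} σ' dμ < ∞ for i = 1, 2, and suppose there is c₀ > 0 such that for each pair i ≠ j in {1,2} and every measurable f ≥ 0 supported in B_i with f ∈ L^p_σ: |Tf(z)| ≥ c₀·(1/μ(B_i))·∫_{B_i} f dμ for μ-a.e. z ∈ B_j. Then ((1/μ(B₁))·∫_{B₁} σ dμ)·((1/μ(B₁))·∫_{B₁} σ' dμ)^{p-1} ≤ c₀^{-2p}·A^{2p}. -/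
open MeasureTheory ENNReal

lemma aux_test {Ω : Type*} [MeasurableSpace Ω] (μ : Measure Ω)
    (p : ℝ) (hp : 1 < p)
    (σ : Ω → ℝ) (hσm : Measurable σ)
    (T : (Ω → ℂ) → Ω → ℂ) (A : ℝ)
    (hTbd : ∀ f : Ω → ℂ, Measurable f →
      (∫⁻ z, ENNReal.ofReal ‖f z‖ ^ p * ENNReal.ofReal (σ z) ∂μ) < ⊤ →
      (∫⁻ z, ENNReal.ofReal ‖T f z‖ ^ p * ENNReal.ofReal (σ z) ∂μ) ^ (1 / p) ≤
        ENNReal.ofReal A *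
          (∫⁻ z, ENNReal.ofReal ‖f z‖ ^ p * ENNReal.ofReal (σ z) ∂μ) ^ (1 / p))
    (B : Set Ω) (f : Ω → ℝ) (hf : Measurable f) (hf0 : ∀ x, 0 ≤ f x)
    (hfin : (∫⁻ z, ENNReal.ofReal (f z) ^ p * ENNReal.ofReal (σ z) ∂μ) < ⊤)
    (c : ℝ≥0∞)
    (h : ∀ᵐ z ∂(μ.restrict B), c ≤ ENNReal.ofReal ‖T (fun x => (f x : ℂ)) z‖) :
    c ^ p * ∫⁻ x in B, ENNReal.ofReal (σ x) ∂μ ≤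
      ENNReal.ofReal A ^ p * ∫⁻ z, ENNReal.ofReal (f z) ^ p * ENNReal.ofReal (σ z) ∂μ := by
  have hp0 : 0 < p := by linarith
  have hn : ∀ z, ‖((f z : ℝ) : ℂ)‖ = f z := fun z => by
    rw [Complex.norm_real, Real.norm_of_nonneg (hf0 z)]
  have h1 := hTbd (fun x => (f x : ℂ)) (Complex.measurable_ofReal.comp hf)
    (by simpa only [hn] using hfin)
  simp only [hn] at h1
  have h2 := ENNReal.rpow_le_rpow h1 hp0.le
  rw [ENNReal.mul_rpow_of_nonneg _ _ hp0.le, ← ENNReal.rpow_mul, ← ENNReal.rpow_mul,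
    one_div_mul_cancel hp0.ne', ENNReal.rpow_one, ENNReal.rpow_one] at h2
  refine le_trans ?_ h2
  rw [← lintegral_const_mul _ hσm.ennreal_ofReal]
  refine le_trans (lintegral_mono_ae ?_) (setLIntegral_le_lintegral B _)
  filter_upwards [h] with z hz
  gcongr

/-- Abstract two-ball testing argument for the necessity of the
Bekolle–Bonami condition: if a bounded linear operator `T` on `L^p_σ`
dominates averages between two sets `B₁, B₂`, then the `B_p` quantity of `σ`
on `B₁` is at most `c₀^{-2p}·A^{2p}`. -/
theorem statement19 {Ω : Type*} [MeasurableSpace Ω] (μ : Measure Ω)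
    (p : ℝ) (hp : 1 < p)
    (σ : Ω → ℝ) (hσm : Measurable σ) (hσpos : ∀ᵐ z ∂μ, 0 < σ z)
    (T : (Ω → ℂ) → Ω → ℂ)
    (hadd : ∀ f g : Ω → ℂ, T (f + g) = T f + T g)
    (hsmul : ∀ (a : ℂ) (f : Ω → ℂ), T (a • f) = a • T f)
    (A : ℝ) (hA : 0 ≤ A)
    (hTbd : ∀ f : Ω → ℂ, Measurable f →
      (∫⁻ z, ENNReal.ofReal ‖f z‖ ^ p * ENNReal.ofReal (σ z) ∂μ) < ⊤ →
      (∫⁻ z, ENNReal.ofReal ‖T f z‖ ^ p * ENNReal.ofReal (σ z) ∂μ) ^ (1 / p) ≤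
        ENNReal.ofReal A *
          (∫⁻ z, ENNReal.ofReal ‖f z‖ ^ p * ENNReal.ofReal (σ z) ∂μ) ^ (1 / p))
    (B₁ B₂ : Set Ω) (hB₁m : MeasurableSet B₁) (hB₂m : MeasurableSet B₂)
    (hB₁pos : 0 < μ B₁) (hB₁fin : μ B₁ < ⊤)
    (hB₂pos : 0 < μ B₂) (hB₂fin : μ B₂ < ⊤)
    (hσB₁ : ∫⁻ x in B₁, ENNReal.ofReal (σ x) ∂μ < ⊤)
    (hσB₂ : ∫⁻ x in B₂, ENNReal.ofReal (σ x) ∂μ < ⊤)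
    (hσ'B₁ : ∫⁻ x in B₁, ENNReal.ofReal (σ x ^ (-1 / (p - 1))) ∂μ < ⊤)
    (hσ'B₂ : ∫⁻ x in B₂, ENNReal.ofReal (σ x ^ (-1 / (p - 1))) ∂μ < ⊤)
    (c₀ : ℝ) (hc₀ : 0 < c₀)
    (hT12 : ∀ f : Ω → ℝ, Measurable f → (∀ x, 0 ≤ f x) →
      Function.support f ⊆ B₁ →
      (∫⁻ z, ENNReal.ofReal (f z) ^ p * ENNReal.ofReal (σ z) ∂μ) < ⊤ →
      ∀ᵐ z ∂(μ.restrict B₂),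
        ENNReal.ofReal c₀ * ((∫⁻ x in B₁, ENNReal.ofReal (f x) ∂μ) / μ B₁) ≤
          ENNReal.ofReal ‖T (fun x => (f x : ℂ)) z‖)
    (hT21 : ∀ f : Ω → ℝ, Measurable f → (∀ x, 0 ≤ f x) →
      Function.support f ⊆ B₂ →
      (∫⁻ z, ENNReal.ofReal (f z) ^ p * ENNReal.ofReal (σ z) ∂μ) < ⊤ →
      ∀ᵐ z ∂(μ.restrict B₁),
        ENNReal.ofReal c₀ * ((∫⁻ x in B₂, ENNReal.ofReal (f x) ∂μ) / μ B₂) ≤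
          ENNReal.ofReal ‖T (fun x => (f x : ℂ)) z‖) :
    ((∫⁻ x in B₁, ENNReal.ofReal (σ x) ∂μ) / μ B₁) *
        ((∫⁻ x in B₁, ENNReal.ofReal (σ x ^ (-1 / (p - 1))) ∂μ) / μ B₁) ^ (p - 1) ≤
      ENNReal.ofReal (c₀ ^ (-(2 * p)) * A ^ (2 * p)) := by
  have hp0 : 0 < p := by linarith
  have hp1 : 0 < p - 1 := by linarith
  set S₁ := ∫⁻ x in B₁, ENNReal.ofReal (σ x) ∂μ with hS₁
  set S₂ := ∫⁻ x in B₂, ENNReal.ofReal (σ x) ∂μ with hS₂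
  set D := ∫⁻ x in B₁, ENNReal.ofReal (σ x ^ (-1 / (p - 1))) ∂μ with hD
  -- testing on the indicator of `B₂`
  have hi2 : ∫⁻ z, ENNReal.ofReal (B₂.indicator (fun _ => (1 : ℝ)) z) ^ p *
      ENNReal.ofReal (σ z) ∂μ = S₂ := by
    rw [hS₂, ← lintegral_indicator hB₂m]
    refine lintegral_congr fun z => ?_
    by_cases hz : z ∈ B₂ <;> simp [hz, hp0]
  have hm2 : ∫⁻ x in B₂, ENNReal.ofReal (B₂.indicator (fun _ => (1 : ℝ)) x) ∂μ = μ B₂ := by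
    rw [setLIntegral_congr_fun hB₂m (g := fun _ => 1) (fun z hz => by simp [hz])]
    simp
  have e2 := aux_test μ p hp σ hσm T A hTbd B₁ (B₂.indicator (fun _ => (1 : ℝ)))
    (measurable_const.indicator hB₂m)
    (fun x => Set.indicator_nonneg (fun _ _ => zero_le_one) x) (by rw [hi2]; exact hσB₂) _
    (hT21 _ (measurable_const.indicator hB₂m)
      (fun x => Set.indicator_nonneg (fun _ _ => zero_le_one) x)
      Set.support_indicator_subset (by rw [hi2]; exact hσB₂))
  rw [hi2, hm2, ENNReal.div_self hB₂pos.ne' hB₂fin.ne, mul_one] at e2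
  -- testing on the dual weight on `B₁`
  set f : Ω → ℝ := B₁.indicator (fun x => |σ x| ^ (-1 / (p - 1))) with hf
  have hfm : Measurable f :=
    (Measurable.pow_const (measurable_abs.comp hσm) _).indicator hB₁m
  have hf0 : ∀ x, 0 ≤ f x :=
    fun x => Set.indicator_nonneg (fun _ _ => Real.rpow_nonneg (abs_nonneg _) _) x
  have hi1 : ∫⁻ z, ENNReal.ofReal (f z) ^ p * ENNReal.ofReal (σ z) ∂μ = D := by
    rw [hD, ← lintegral_indicator hB₁m]
    refine lintegral_congr_ae ?_
    filter_upwards [hσpos] with z hz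
    by_cases hzB : z ∈ B₁
    · simp only [hf, Set.indicator_of_mem hzB, abs_of_pos hz]
      rw [ENNReal.ofReal_rpow_of_nonneg (Real.rpow_nonneg hz.le _) hp0.le,
        ← ENNReal.ofReal_mul (by positivity), ← Real.rpow_mul hz.le]
      congr 1
      nth_rewrite 2 [← Real.rpow_one (σ z)]
      rw [← Real.rpow_add hz]
      congr 1
      field_simp
      ring
    · simp [hf, hzB, hp0]
  have hm1 : ∫⁻ x in B₁, ENNReal.ofReal (f x) ∂μ = D := by
    rw [hD]
    refine lintegral_congr_ae ?_
    filter_upwards [ae_restrict_of_ae hσpos, ae_restrict_mem hB₁m] with z hz hzB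
    simp only [hf, Set.indicator_of_mem hzB, abs_of_pos hz]
  have e1 := aux_test μ p hp σ hσm T A hTbd B₂ f hfm hf0 (by rw [hi1]; exact hσ'B₁) _
    (hT12 f hfm hf0 Set.support_indicator_subset (by rw [hi1]; exact hσ'B₁))
  rw [hi1, hm1] at e1
  have hD0 : D ≠ 0 := by
    intro h0
    rw [hD, lintegral_eq_zero_iff (hσm.pow_const _).ennreal_ofReal] at h0
    have : ∀ᵐ z ∂(μ.restrict B₁), False := by
      filter_upwards [h0, ae_restrict_of_ae hσpos] with z hz hz'
      have := Real.rpow_pos_of_pos hz' (-1 / (p - 1))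
      simp only [Pi.zero_apply, ENNReal.ofReal_eq_zero] at hz
      linarith
    rw [Filter.eventually_false_iff_eq_bot, ae_eq_bot, Measure.restrict_eq_zero] at this
    exact hB₁pos.ne' this
  have hDt : D ≠ ⊤ := hσ'B₁.ne
  rw [ENNReal.mul_rpow_of_nonneg _ _ hp0.le] at e1
  set a := ENNReal.ofReal A ^ p with ha
  set c := ENNReal.ofReal c₀ ^ p with hc
  have hc0 : c ≠ 0 := by
    rw [hc]; exact (ENNReal.rpow_pos (by simpa using hc₀) ENNReal.ofReal_ne_top).ne'
  have hct : c ≠ ⊤ := ENNReal.rpow_ne_top_of_nonneg hp0.le ENNReal.ofReal_ne_top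
  have hR : ENNReal.ofReal (c₀ ^ (-(2 * p)) * A ^ (2 * p)) = (c * c)⁻¹ * (a * a) := by
    rw [ENNReal.ofReal_mul (by positivity), ← ENNReal.ofReal_rpow_of_pos hc₀,
      ← ENNReal.ofReal_rpow_of_nonneg hA (by positivity), ENNReal.rpow_neg, two_mul,
      ENNReal.rpow_add_of_nonneg _ _ hp0.le hp0.le, ENNReal.rpow_add_of_nonneg _ _ hp0.le hp0.le]
  rw [hR]
  set q := D / μ B₁ with hq
  have hq0 : q ≠ 0 := ENNReal.div_ne_zero.2 ⟨hD0, hB₁fin.ne⟩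
  have hqt : q ≠ ⊤ := ENNReal.div_ne_top hDt hB₁pos.ne'
  have hqp : q ^ p = q ^ (p - 1) * q := by
    conv_lhs => rw [show p = (p - 1) + 1 by ring, ENNReal.rpow_add _ _ hq0 hqt, ENNReal.rpow_one]
  have key : c * c * (S₁ / μ B₁ * q ^ (p - 1)) * D ≤ a * a * D := by
    calc c * c * (S₁ / μ B₁ * q ^ (p - 1)) * D
        = (c * S₁) * (c * q ^ p) := by
          rw [hqp, hq]; simp only [div_eq_mul_inv]; ring
      _ ≤ (a * S₂) * (c * q ^ p) := by gcongr
      _ = a * (c * q ^ p * S₂) := by ring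
      _ ≤ a * (a * D) := by gcongr
      _ = a * a * D := by ring
  have key2 := (ENNReal.mul_le_mul_iff_left hD0 hDt).1 key
  rw [mul_comm (c * c)⁻¹, ← div_eq_mul_inv,
    ENNReal.le_div_iff_mul_le (Or.inl (mul_ne_zero hc0 hc0))
      (Or.inl (ENNReal.mul_ne_top hct hct)), mul_comm]
  exact key2
end
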